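/- Let n, k, ℓ be positive integers with ℓ ≤ k. Then disc_ℓ(F_{n,k}, ν) ≤ 2·exp(−n/4^ℓ), where ν is the probability distribution on {0,1}^{n×k} under which the weight of every point of F_{n,k}^{-1}(1) is double the weight of every point of F_{n,k}^{-1}(0); that is, ν(X) = 2/Z if F_{n,k}(X) = 1 and ν(X) = 1/Z if F_{n,k}(X) = 0, with Z = 2|F_{n,k}^{-1}(1)| + |F_{n,k}^{-1}(0)|. -/

import Mathlib

open Finset

/-- `χ` is an `S`-cylinder intersection on `{0,1}^{n×k}`: a product over `j ∈ S` of
`{0,1}`-valued functions `φ j`, where `φ j` does not depend on the `j`-th column. -/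
def IsCylinderOn (n k : ℕ) (S : Finset (Fin k))
    (χ : (Fin n → Fin k → Bool) → ℝ) : Prop :=
  ∃ φ : Fin k → ((Fin n → Fin k → Bool) → ℝ),
    (∀ j ∈ S, ∀ X, φ j X = 0 ∨ φ j X = 1) ∧
    (∀ j ∈ S, ∀ X Y, (∀ i, ∀ j', j' ≠ j → X i j' = Y i j') → φ j X = φ j Y) ∧
    (∀ X, χ X = ∏ j ∈ S, φ j X)

/-- The `ℓ`-discrepancy of a Boolean function `F` on `{0,1}^{n×k}` with respect to
the distribution `μ`: the maximum over sets `S ⊆ {1,…,k}` with `|S| ≤ ℓ` and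
`S`-cylinder intersections `χ` of `|Σ_X (−1)^{F(X)} μ(X) χ(X)|`. -/
noncomputable def discL (n k ℓ : ℕ) (F : (Fin n → Fin k → Bool) → Bool)
    (μ : (Fin n → Fin k → Bool) → ℝ) : ℝ :=
  sSup {t : ℝ | ∃ S : Finset (Fin k), ∃ χ : (Fin n → Fin k → Bool) → ℝ,
    S.card ≤ ℓ ∧ IsCylinderOn n k S χ ∧
    t = |∑ X : Fin n → Fin k → Bool, (if F X then (-1 : ℝ) else 1) * μ X * χ X|}

/-- The XOR `X_{i,1} ⊕ ⋯ ⊕ X_{i,k}` of the entries of row `i`, as `0` or `1`. -/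
def rowXor {k : ℕ} (u : Fin k → Bool) : ℕ :=
  (Finset.univ.filter (fun j => u j = true)).card % 2

/-- `F_{n,k}(X) = MOD₃(⊕_j X_{1,j}, …, ⊕_j X_{n,j})`: true iff
`Σ_i (X_{i,1} ⊕ ⋯ ⊕ X_{i,k}) ≡ 0 (mod 3)`. -/
def Fmod (n k : ℕ) (X : Fin n → Fin k → Bool) : Bool :=
  decide ((∑ i, rowXor (X i)) % 3 = 0)

/-- The distribution `ν` on `{0,1}^{n×k}`: the weight of every point of
`F_{n,k}⁻¹(1)` is double the weight of every point of `F_{n,k}⁻¹(0)`. -/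
noncomputable def nuDist (n k : ℕ) (X : Fin n → Fin k → Bool) : ℝ :=
  (if Fmod n k X then 2 else 1) /
    ((2 * (Finset.univ.filter (fun Y : Fin n → Fin k → Bool => Fmod n k Y = true)).card +
      (Finset.univ.filter (fun Y : Fin n → Fin k → Bool => Fmod n k Y = false)).card : ℕ) : ℝ)

/-- Parity of a row as a Boolean. -/
def par {k : ℕ} (u : Fin k → Bool) : Bool := decide (rowXor u = 1)

/-- Shift the `j`-th column by `w`. -/
def colShift {n k : ℕ} (j : Fin k) (w : Fin n → Bool) (X : Fin n → Fin k → Bool) :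
    Fin n → Fin k → Bool :=
  fun i => Function.update (X i) j (xor (X i j) (w i))

lemma par_update {k : ℕ} (u : Fin k → Bool) (j : Fin k) (b : Bool) :
    par (Function.update u j (xor (u j) b)) = xor (par u) b := by
  have key : ∀ v : Fin k → Bool, (Finset.univ.filter (fun j => v j = true)).card
      = (if v j = true then 1 else 0) +
        ∑ i ∈ Finset.univ.erase j, (if v i = true then 1 else 0) := by
    intro v
    rw [Finset.card_filter,
      ← Finset.add_sum_erase _ (fun i => if v i = true then 1 else 0) (Finset.mem_univ j)]
  have e : ∑ i ∈ Finset.univ.erase j,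
      (if Function.update u j (xor (u j) b) i = true then 1 else 0)
      = ∑ i ∈ Finset.univ.erase j, (if u i = true then 1 else 0) := by
    refine Finset.sum_congr rfl fun i hi => ?_
    rw [Function.update_of_ne (Finset.ne_of_mem_erase hi)]
  unfold par rowXor
  rw [key, key u, e, Function.update_self]
  generalize ∑ i ∈ Finset.univ.erase j, (if u i = true then 1 else 0) = m
  rcases Nat.mod_two_eq_zero_or_one m with h | h <;> cases u j <;> cases b <;>
    simp [Nat.add_mod, h]

lemma rowXor_eq {k : ℕ} (u : Fin k → Bool) : rowXor u = if par u then 1 else 0 := by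
  unfold par
  have : rowXor u < 2 := Nat.mod_lt _ (by norm_num)
  interval_cases h : rowXor u <;> simp

lemma par_colShift {n k : ℕ} (j : Fin k) (w : Fin n → Bool) (X : Fin n → Fin k → Bool)
    (i : Fin n) : par (colShift j w X i) = xor (par (X i)) (w i) :=
  par_update _ _ _

lemma colShift_colShift {n k : ℕ} (j : Fin k) (y w : Fin n → Bool)
    (X : Fin n → Fin k → Bool) :
    colShift j w (colShift j y X) = colShift j (fun i => xor (y i) (w i)) X := by
  funext i
  simp [colShift]

lemma colShift_invol {n k : ℕ} (j : Fin k) (y : Fin n → Bool) :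
    Function.Involutive (colShift (k := k) j y) := by
  intro X
  rw [colShift_colShift]
  funext i
  simp [colShift]

lemma sum_colShift {n k : ℕ} (j : Fin k) (y : Fin n → Bool)
    (f : (Fin n → Fin k → Bool) → ℂ) : ∑ X, f (colShift j y X) = ∑ X, f X :=
  (colShift_invol j y).bijective.sum_comp f

lemma sum_xor {n : ℕ} (y : Fin n → Bool) (f : (Fin n → Bool) → ℂ) :
    ∑ w : Fin n → Bool, f (fun i => xor (y i) (w i)) = ∑ w, f w := by
  have : Function.Involutive (fun w : Fin n → Bool => fun i => xor (y i) (w i)) := by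
    intro w; funext i; simp
  exact this.bijective.sum_comp f

lemma cs_step {n k : ℕ} (j : Fin k) (φ : (Fin n → Fin k → Bool) → ℝ)
    (F : (Fin n → Fin k → Bool) → ℂ) (h01 : ∀ X, φ X = 0 ∨ φ X = 1)
    (hind : ∀ w X, φ (colShift j w X) = φ X) :
    (Fintype.card (Fin n → Bool) : ℝ) * ‖∑ X, (φ X : ℂ) * F X‖ ^ 2 ≤
      (Fintype.card (Fin n → Fin k → Bool) : ℝ) *
        ‖∑ w, ∑ X, F X * (starRingEnd ℂ) (F (colShift j w X))‖ := by
  set N : ℝ := (Fintype.card (Fin n → Bool) : ℝ) with hN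
  have hNpos : 0 < N := by rw [hN]; exact_mod_cast Fintype.card_pos
  set T : (Fin n → Fin k → Bool) → ℂ := fun X => ∑ y, F (colShift j y X) with hT
  have h1 : (N : ℂ) * ∑ X, (φ X : ℂ) * F X = ∑ X, (φ X : ℂ) * T X := by
    have : ∀ y : Fin n → Bool, ∑ X, (φ X : ℂ) * F (colShift j y X) = ∑ X, (φ X : ℂ) * F X := by
      intro y
      rw [← sum_colShift j y (fun X => (φ X : ℂ) * F X)]
      simp only [hind]
    simp only [hT, Finset.mul_sum]
    rw [Finset.sum_comm]
    simp only [this, Finset.sum_const, Finset.card_univ, nsmul_eq_mul, hN, Finset.mul_sum]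
    simp
  have h2 : ‖∑ X, (φ X : ℂ) * T X‖ ^ 2 ≤
      (Fintype.card (Fin n → Fin k → Bool) : ℝ) * ∑ X, ‖T X‖ ^ 2 := by
    have a : ‖∑ X, (φ X : ℂ) * T X‖ ≤ ∑ X, ‖T X‖ := by
      refine norm_sum_le_of_le _ fun X _ => ?_
      rcases h01 X with h | h <;> simp [h]
    calc _ ≤ (∑ X, ‖T X‖) ^ 2 := by gcongr
      _ ≤ _ := by
        have := sq_sum_le_card_mul_sum_sq (s := Finset.univ) (f := fun X => ‖T X‖)
        simpa [Finset.card_univ] using this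
  have h3 : ((∑ X, ‖T X‖ ^ 2 : ℝ) : ℂ) =
      N * ∑ w, ∑ X, F X * (starRingEnd ℂ) (F (colShift j w X)) := by
    have e : ∀ X, ((‖T X‖ ^ 2 : ℝ) : ℂ) =
        ∑ y, ∑ w, F (colShift j y X) * (starRingEnd ℂ) (F (colShift j w (colShift j y X))) := by
      intro X
      have : ((‖T X‖ ^ 2 : ℝ) : ℂ) = T X * (starRingEnd ℂ) (T X) := by
        rw [Complex.mul_conj, Complex.normSq_eq_norm_sq]
      rw [this, hT]
      simp only [map_sum, Finset.sum_mul]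
      refine Finset.sum_congr rfl fun y _ => ?_
      rw [Finset.mul_sum]
      simp only [colShift_colShift]
      exact (sum_xor y (fun w => F (colShift j y X) * (starRingEnd ℂ) (F (colShift j w X)))).symm
    rw [Complex.ofReal_sum]
    simp only [e]
    rw [Finset.sum_comm]
    have e2 : ∀ y : Fin n → Bool,
        ∑ X, ∑ w, F (colShift j y X) * (starRingEnd ℂ) (F (colShift j w (colShift j y X)))
        = ∑ w, ∑ X, F X * (starRingEnd ℂ) (F (colShift j w X)) := by
      intro y
      rw [sum_colShift j y (fun X => ∑ w, F X * (starRingEnd ℂ) (F (colShift j w X))),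
        Finset.sum_comm]
    simp only [e2, Finset.sum_const, Finset.card_univ, nsmul_eq_mul, hN]
    simp
  have h4 : ∑ X, ‖T X‖ ^ 2 =
      N * ‖∑ w, ∑ X, F X * (starRingEnd ℂ) (F (colShift j w X))‖ := by
    have := congrArg norm h3
    rw [norm_mul, Complex.norm_real, Complex.norm_real, Real.norm_of_nonneg hNpos.le,
      Real.norm_of_nonneg (Finset.sum_nonneg fun _ _ => by positivity)] at this
    exact this
  rw [← h1, norm_mul, Complex.norm_real, Real.norm_of_nonneg hNpos.le, h4] at h2
  have : N * (N * ‖∑ X, (φ X : ℂ) * F X‖ ^ 2) ≤ N * ((Fintype.card (Fin n → Fin k → Bool) : ℝ) *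
        ‖∑ w, ∑ X, F X * (starRingEnd ℂ) (F (colShift j w X))‖) := by
    nlinarith [h2]
  exact le_of_mul_le_mul_left this hNpos

/-- Multiplicative derivative of a function on a bit. -/
noncomputable def der (G : Bool → ℂ) (b : Bool) : ℂ := G b * (starRingEnd ℂ) (G (!b))

/-- Unimodular functions of one bit whose two values differ by a primitive cube root of unity. -/
def Good (G : Bool → ℂ) : Prop :=
  (∀ b, G b * (starRingEnd ℂ) (G b) = 1) ∧ (der G false) ^ 2 + der G false + 1 = 0

lemma der_conj (G : Bool → ℂ) : der G true = (starRingEnd ℂ) (der G false) := by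
  simp [der, mul_comm]

lemma der_unit {G : Bool → ℂ} (h : Good G) (b : Bool) :
    der G b * (starRingEnd ℂ) (der G b) = 1 := by
  have h1 := h.1 b
  have h2 := h.1 (!b)
  simp only [der, map_mul, Complex.conj_conj]
  linear_combination G (!b) * (starRingEnd ℂ) (G (!b)) * h1 + h2

lemma der_sum {G : Bool → ℂ} (h : Good G) : der G false + der G true = -1 := by
  have h1 := der_unit h false
  have h2 := h.2
  rw [der_conj]
  linear_combination (starRingEnd ℂ) (der G false) * h2 - (der G false + 1) * h1

lemma good_der {G : Bool → ℂ} (h : Good G) : Good (der G) := by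
  refine ⟨der_unit h, ?_⟩
  have h2 := h.2
  have e : der (der G) false = (der G false) ^ 2 := by
    rw [der, Bool.not_false, der_conj, Complex.conj_conj, sq]
  rw [e]
  linear_combination (der G false ^ 2 - der G false + 1) * h2

lemma prod_shift {n k : ℕ} (j : Fin k) (A : Finset (Fin n)) (G : Fin n → Bool → ℂ)
    (hG : ∀ i, Good (G i)) (w : Fin n → Bool) (X : Fin n → Fin k → Bool) :
    (∏ i ∈ A, G i (par (X i))) * (starRingEnd ℂ) (∏ i ∈ A, G i (par (colShift j w X i))) =
      ∏ i ∈ A.filter (fun i => w i = true), der (G i) (par (X i)) := by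
  rw [map_prod, ← Finset.prod_mul_distrib, Finset.prod_filter]
  refine Finset.prod_congr rfl fun i _ => ?_
  rw [par_colShift]
  cases h : w i
  · simpa using (hG i).1 _
  · simp [der]

lemma sum_par {k : ℕ} (j : Fin k) (H : Bool → ℂ) :
    ∑ u : Fin k → Bool, H (par u) =
      (Fintype.card (Fin k → Bool) : ℂ) * ((H false + H true) / 2) := by
  have hinv : Function.Involutive
      (fun u : Fin k → Bool => Function.update u j (xor (u j) true)) := by
    intro u; simp
  have h1 : ∑ u : Fin k → Bool, H (!(par u)) = ∑ u : Fin k → Bool, H (par u) := by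
    rw [← hinv.bijective.sum_comp (fun u => H (par u))]
    refine Finset.sum_congr rfl fun u _ => ?_
    change _ = H (par (Function.update u j (xor (u j) true)))
    rw [par_update u j true, Bool.xor_true]
  have h2 : ∑ u : Fin k → Bool, (H (par u) + H (!(par u))) =
      (Fintype.card (Fin k → Bool) : ℂ) * (H false + H true) := by
    have : ∀ u : Fin k → Bool, H (par u) + H (!(par u)) = H false + H true := by
      intro u
      cases par u <;> simp [add_comm]
    simp only [this, Finset.sum_const, Finset.card_univ, nsmul_eq_mul]
  rw [Finset.sum_add_distrib, h1] at h2
  linear_combination h2 / 2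

lemma sum_prod_par {n k : ℕ} (j : Fin k) (A : Finset (Fin n)) (H : Fin n → Bool → ℂ) :
    ∑ X : Fin n → Fin k → Bool, ∏ i ∈ A, H i (par (X i)) =
      (Fintype.card (Fin n → Fin k → Bool) : ℂ) *
        ∏ i ∈ A, ((H i false + H i true) / 2) := by
  have e : ∀ X : Fin n → Fin k → Bool, ∏ i ∈ A, H i (par (X i)) =
      ∏ i, (fun b => if i ∈ A then H i b else 1) (par (X i)) := by
    intro X
    simp [Finset.prod_ite_mem]
  simp only [e]
  rw [← Fintype.prod_sum (fun i (u : Fin k → Bool) => if i ∈ A then H i (par u) else 1)]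
  have e2 : ∀ i, ∑ u : Fin k → Bool, (if i ∈ A then H i (par u) else 1) =
      (Fintype.card (Fin k → Bool) : ℂ) *
        (if i ∈ A then (H i false + H i true) / 2 else 1) := by
    intro i
    split_ifs
    · exact sum_par j (H i)
    · simp
  simp only [e2, Finset.prod_mul_distrib, Finset.prod_const, Finset.card_univ]
  congr 1
  · simp [Fintype.card_pi]
  · simp [Finset.prod_ite_mem]

lemma sum_filter_pow {K : Type*} [Field K] [CharZero K] {n : ℕ} (A : Finset (Fin n)) (c : K) :
    ∑ w : Fin n → Bool, c ^ (A.filter (fun i => w i = true)).card =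
      (Fintype.card (Fin n → Bool) : K) * ((1 + c) / 2) ^ A.card := by
  have e : ∀ w : Fin n → Bool, c ^ (A.filter (fun i => w i = true)).card =
      ∏ i, (if i ∈ A then (if w i = true then c else 1) else 1) := by
    intro w
    rw [Finset.prod_ite_mem, Finset.univ_inter, ← Finset.prod_filter, Finset.prod_const]
  simp only [e]
  rw [← Fintype.prod_sum (fun i (b : Bool) => if i ∈ A then (if b = true then c else 1) else 1)]
  have e2 : ∀ i, ∑ b : Bool, (if i ∈ A then (if b = true then c else 1) else 1) =
      2 * (if i ∈ A then (1 + c) / 2 else 1) := by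
    intro i
    split_ifs
    · simp; ring
    · simp
  simp only [e2, Finset.prod_mul_distrib, Finset.prod_const, Finset.card_univ]
  simp [Finset.prod_ite_mem, div_pow]

/-- Hypotheses on the family of factors of a cylinder intersection. -/
def CylFam {n k : ℕ} (S : Finset (Fin k)) (φ : Fin k → (Fin n → Fin k → Bool) → ℝ) : Prop :=
  (∀ j ∈ S, ∀ X, φ j X = 0 ∨ φ j X = 1) ∧
    (∀ j ∈ S, ∀ X Y, (∀ i, ∀ j', j' ≠ j → X i j' = Y i j') → φ j X = φ j Y)

lemma cyl_shift {n k : ℕ} {S : Finset (Fin k)} {φ : Fin k → (Fin n → Fin k → Bool) → ℝ}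
    (h : CylFam S φ) {j : Fin k} (hj : j ∈ S) (w : Fin n → Bool) (X : Fin n → Fin k → Bool) :
    φ j (colShift j w X) = φ j X := by
  refine h.2 j hj _ _ fun i j' hne => ?_
  simp [colShift, Function.update_of_ne hne]

lemma cyl_mul {n k : ℕ} {S : Finset (Fin k)} {φ : Fin k → (Fin n → Fin k → Bool) → ℝ}
    (h : CylFam S φ) (j : Fin k) (w : Fin n → Bool) :
    CylFam S (fun j' X => φ j' X * φ j' (colShift j w X)) := by
  refine ⟨fun j' hj' X => ?_, fun j' hj' X Y hXY => ?_⟩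
  · rcases h.1 j' hj' X with a | a <;> rcases h.1 j' hj' (colShift j w X) with b | b <;>
      simp [a, b]
  · have h1 := h.2 j' hj' X Y hXY
    have h2 : φ j' (colShift j w X) = φ j' (colShift j w Y) := by
      refine h.2 j' hj' _ _ fun i j'' hne => ?_
      by_cases hc : j'' = j
      · subst hc
        simp [colShift, hXY i j'' hne]
      · simp [colShift, Function.update_of_ne hc, hXY i j'' hne]
    simp only [h1, h2]

lemma main_bound {n k : ℕ} (S : Finset (Fin k)) (hS : S.Nonempty) :
    ∀ φ : Fin k → (Fin n → Fin k → Bool) → ℝ, CylFam S φ →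
    ∀ (A : Finset (Fin n)) (G : Fin n → Bool → ℂ), (∀ i, Good (G i)) →
    (‖∑ X, ((∏ j ∈ S, φ j X : ℝ) : ℂ) * ∏ i ∈ A, G i (par (X i))‖ /
        (Fintype.card (Fin n → Fin k → Bool) : ℝ)) ^ (2 ^ S.card) ≤
      (1 - 3 / 2 / 2 ^ S.card : ℝ) ^ A.card := by
  have hM : (0 : ℝ) < (Fintype.card (Fin n → Fin k → Bool) : ℝ) := by
    exact_mod_cast Fintype.card_pos
  have hN : (0 : ℝ) < (Fintype.card (Fin n → Bool) : ℝ) := by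
    exact_mod_cast Fintype.card_pos
  induction hS using Finset.Nonempty.cons_induction with
  | singleton j =>
    intro φ hφ A G hG
    have hcs := cs_step j (φ j) (fun X => ∏ i ∈ A, G i (par (X i)))
      (hφ.1 j (by simp)) (cyl_shift hφ (by simp))
    simp only [prod_shift j A G hG, sum_prod_par j] at hcs
    have e : ∀ w : Fin n → Bool, ∏ i ∈ A.filter (fun i => w i = true),
        ((der (G i) false + der (G i) true) / 2) =
        (-1 / 2 : ℂ) ^ (A.filter (fun i => w i = true)).card := by
      intro w
      rw [Finset.prod_congr rfl (fun i _ => by rw [der_sum (hG i)]), Finset.prod_const]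
    simp only [e] at hcs
    rw [← Finset.mul_sum, sum_filter_pow] at hcs
    have e3 : ((1 + -1 / 2) / 2 : ℂ) = ((1 / 4 : ℝ) : ℂ) := by push_cast; norm_num
    rw [e3, norm_mul, norm_mul, norm_pow, Complex.norm_natCast, Complex.norm_natCast,
      Complex.norm_real, Real.norm_of_nonneg (by norm_num)] at hcs
    simp only [Finset.prod_singleton, Finset.card_singleton, pow_one]
    have e4 : (1 - 3 / 2 / 2 : ℝ) = 1 / 4 := by norm_num
    rw [e4, div_pow, div_le_iff₀ (by positivity)]
    refine le_of_mul_le_mul_left ?_ hN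
    calc _ ≤ _ := hcs
      _ = _ := by ring
  | cons j S hj hS ih =>
    intro φ hφ A G hG
    have hφ' : CylFam S φ :=
      ⟨fun i hi => hφ.1 i (Finset.mem_cons_of_mem hi),
        fun i hi => hφ.2 i (Finset.mem_cons_of_mem hi)⟩
    have hcs := cs_step j (φ j)
      (fun X => ((∏ j ∈ S, φ j X : ℝ) : ℂ) * ∏ i ∈ A, G i (par (X i)))
      (hφ.1 j (by simp)) (cyl_shift hφ (by simp))
    set M : ℝ := (Fintype.card (Fin n → Fin k → Bool) : ℝ)
    set N : ℝ := (Fintype.card (Fin n → Bool) : ℝ) with hNdef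
    have e : ∀ w X, (((∏ j ∈ S, φ j X : ℝ) : ℂ) * ∏ i ∈ A, G i (par (X i))) *
        (starRingEnd ℂ) (((∏ j' ∈ S, φ j' (colShift j w X) : ℝ) : ℂ) *
          ∏ i ∈ A, G i (par (colShift j w X i))) =
        ((∏ j' ∈ S, (fun j' X => φ j' X * φ j' (colShift j w X)) j' X : ℝ) : ℂ) *
          ∏ i ∈ A.filter (fun i => w i = true), der (G i) (par (X i)) := by
      intro w X
      rw [← prod_shift j A G hG, Finset.prod_mul_distrib, map_mul, Complex.conj_ofReal]
      push_cast
      ring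
    simp only [e] at hcs
    set a : (Fin n → Bool) → ℝ := fun w => ‖∑ X,
      ((∏ j' ∈ S, (fun j' X => φ j' X * φ j' (colShift j w X)) j' X : ℝ) : ℂ) *
          ∏ i ∈ A.filter (fun i => w i = true), der (G i) (par (X i))‖ / M with ha
    have hbd : ∀ w, a w ^ (2 ^ S.card) ≤
        (1 - 3 / 2 / 2 ^ S.card : ℝ) ^ (A.filter (fun i => w i = true)).card := fun w =>
      ih _ (cyl_mul hφ' j w) _ _ (fun i => good_der (hG i))
    have ha0 : ∀ w, 0 ≤ a w := fun w => by positivity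
    set b : ℝ := ‖∑ X, ((∏ j ∈ Finset.cons j S hj, φ j X : ℝ) : ℂ) *
      ∏ i ∈ A, G i (par (X i))‖ / M with hb
    have hstep : b ^ 2 ≤ ∑ w, (1 / N) * a w := by
      have h1 : N * (b * M) ^ 2 ≤ M * ∑ w, a w * M := by
        have hbM : b * M = ‖∑ X, (φ j X : ℂ) * (((∏ j ∈ S, φ j X : ℝ) : ℂ) *
            ∏ i ∈ A, G i (par (X i)))‖ := by
          rw [hb, div_mul_cancel₀ _ hM.ne']
          congr 1
          refine Finset.sum_congr rfl fun X _ => ?_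
          rw [Finset.prod_cons, Complex.ofReal_mul, mul_assoc]
        rw [hbM]
        refine hcs.trans ?_
        gcongr
        refine (norm_sum_le _ _).trans (Finset.sum_le_sum fun w _ => ?_)
        rw [ha]
        simp only
        rw [div_mul_cancel₀ _ hM.ne']
      rw [← Finset.sum_mul] at h1
      rw [← Finset.mul_sum, one_div, ← div_eq_inv_mul, le_div_iff₀ hN]
      have hM2 : 0 < M ^ 2 := by positivity
      refine le_of_mul_le_mul_left ?_ hM2
      nlinarith [h1]
    have hpow := Real.pow_arith_mean_le_arith_mean_pow Finset.univ (fun _ => 1 / N) a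
      (fun _ _ => by positivity)
      (by rw [Finset.sum_const, Finset.card_univ, nsmul_eq_mul]; exact mul_one_div_cancel hN.ne')
      (fun w _ => ha0 w) (2 ^ S.card)
    rw [Finset.card_cons, pow_succ', pow_mul]
    calc (b ^ 2) ^ 2 ^ S.card ≤ (∑ w, (1 / N) * a w) ^ 2 ^ S.card := by gcongr
      _ ≤ _ := hpow
      _ ≤ ∑ w : Fin n → Bool, (1 / N) *
          (1 - 3 / 2 / 2 ^ S.card : ℝ) ^ (A.filter (fun i => w i = true)).card := by
        gcongr with w
        exact hbd w
      _ = _ := by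
        rw [← Finset.mul_sum, sum_filter_pow, ← mul_assoc, one_div, inv_mul_cancel₀ hN.ne',
          one_mul]
        congr 1
        rw [pow_succ]
        field_simp
        ring

/-- A primitive cube root of unity. -/
noncomputable def om : ℂ := ⟨-1 / 2, Real.sqrt 3 / 2⟩

lemma sqrt_three : Real.sqrt 3 * Real.sqrt 3 = 3 := Real.mul_self_sqrt (by norm_num)

lemma om_conj : om * (starRingEnd ℂ) om = 1 := by
  have := sqrt_three
  apply Complex.ext <;> simp [om] <;> nlinarith

lemma om_sq : om ^ 2 + om + 1 = 0 := by
  have := sqrt_three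
  apply Complex.ext <;> simp [om, sq] <;> nlinarith

lemma om_cube : om ^ 3 = 1 := by
  linear_combination (om - 1) * om_sq

lemma om_re (s : ℕ) : (om ^ s).re = if s % 3 = 0 then 1 else -1 / 2 := by
  have h : om ^ s = om ^ (s % 3) := by
    conv_lhs => rw [← Nat.div_add_mod s 3, pow_add, pow_mul, om_cube, one_pow, one_mul]
  rw [h]
  have h3 : s % 3 < 3 := Nat.mod_lt _ (by norm_num)
  have hr : om.re = -1 / 2 := rfl
  interval_cases s % 3
  · simp
  · simp [hr]
  · have : om ^ 2 = -om - 1 := by linear_combination om_sq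
    rw [this]
    simp [hr]
    norm_num

/-- The one-bit character. -/
noncomputable def gom (b : Bool) : ℂ := if b then om else 1

lemma gom_good : Good gom := by
  refine ⟨fun b => ?_, ?_⟩
  · cases b
    · simp [gom]
    · simpa [gom] using om_conj
  · have := congrArg (starRingEnd ℂ) om_sq
    simpa [der, gom] using this

lemma prod_gom {n k : ℕ} (X : Fin n → Fin k → Bool) :
    ∏ i, gom (par (X i)) = om ^ (∑ i, rowXor (X i)) := by
  rw [← Finset.prod_pow_eq_pow_sum]
  refine Finset.prod_congr rfl fun i _ => ?_
  rw [rowXor_eq]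
  cases par (X i) <;> simp [gom]

lemma exp_bound {n k : ℕ} (S : Finset (Fin k)) (hS : S.Nonempty)
    (φ : Fin k → (Fin n → Fin k → Bool) → ℝ) (hφ : CylFam S φ) (ℓ : ℕ) (hl : S.card ≤ ℓ) :
    ‖∑ X, ((∏ j ∈ S, φ j X : ℝ) : ℂ) * ∏ i, gom (par (X i))‖ /
        (Fintype.card (Fin n → Fin k → Bool) : ℝ) ≤ Real.exp (-(n : ℝ) / 4 ^ ℓ) := by
  have h := main_bound S hS φ hφ Finset.univ (fun _ => gom) (fun _ => gom_good)
  rw [Finset.card_univ, Fintype.card_fin] at h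
  have hm : 1 ≤ S.card := hS.card_pos
  generalize S.card = m at h hl hm
  have h2 : (2 : ℝ) ≤ 2 ^ m := by
    calc (2 : ℝ) = 2 ^ 1 := by norm_num
      _ ≤ 2 ^ m := by gcongr; norm_num
  have hc0 : (0 : ℝ) ≤ 1 - 3 / 2 / 2 ^ m := by
    have : (3 / 2 / 2 ^ m : ℝ) ≤ 1 := by
      rw [div_le_one (by positivity)]; linarith
    linarith
  have hc : (1 - 3 / 2 / 2 ^ m : ℝ) ^ n ≤ Real.exp (-(n : ℝ) / 4 ^ m) ^ (2 ^ m) := by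
    calc (1 - 3 / 2 / 2 ^ m : ℝ) ^ n ≤ (Real.exp (-(1 / 2 ^ m))) ^ n := by
          gcongr
          have := Real.add_one_le_exp (-(1 / 2 ^ m : ℝ))
          have h5 : (1 / 2 ^ m : ℝ) ≤ 3 / 2 / 2 ^ m := by gcongr; norm_num
          linarith
      _ = _ := by
          rw [← Real.exp_nat_mul, ← Real.exp_nat_mul]
          congr 1
          have : (4 : ℝ) ^ m = 2 ^ m * 2 ^ m := by rw [← mul_pow]; norm_num
          rw [this]
          push_cast
          field_simp
  have h3 := le_of_pow_le_pow_left₀ (by positivity) (Real.exp_nonneg _) (h.trans hc)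
  refine h3.trans (Real.exp_le_exp.mpr ?_)
  rw [neg_div, neg_div]
  apply neg_le_neg
  gcongr
  norm_num

/-- discrepancy bound for `F_{n,k}` under `ν`. -/
theorem stmt_15 (n k ℓ : ℕ) (hn : 0 < n) (hℓ : 0 < ℓ) (hℓk : ℓ ≤ k) :
    discL n k ℓ (Fmod n k) (nuDist n k) ≤ 2 * Real.exp (-(n : ℝ) / 4 ^ ℓ) := by
  apply Real.sSup_le _ (by positivity)
  rintro t ⟨S, χ, hSl, ⟨φ, h01, hind, hχ⟩, rfl⟩
  set M : ℝ := (Fintype.card (Fin n → Fin k → Bool) : ℝ) with hMdef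
  have hM : 0 < M := by rw [hMdef]; exact_mod_cast Fintype.card_pos
  have hbound : ‖∑ X, (χ X : ℂ) * ∏ i, gom (par (X i))‖ / M ≤
      Real.exp (-(n : ℝ) / 4 ^ ℓ) := by
    rcases S.eq_empty_or_nonempty with rfl | hS
    · have := exp_bound (n := n) {(⟨0, by omega⟩ : Fin k)} (by simp) (fun _ _ => 1)
        ⟨fun _ _ _ => Or.inr rfl, fun _ _ _ _ _ => rfl⟩ ℓ (by rw [Finset.card_singleton]; exact hℓ)
      simpa [hχ, hMdef] using this
    · simpa only [hχ] using exp_bound S hS φ ⟨h01, hind⟩ ℓ hSl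
  obtain ⟨Z, hZ⟩ : ∃ Z : ℕ, Z =
    2 * (Finset.univ.filter (fun Y : Fin n → Fin k → Bool => Fmod n k Y = true)).card +
      (Finset.univ.filter (fun Y : Fin n → Fin k → Bool => Fmod n k Y = false)).card := ⟨_, rfl⟩
  have hMZ : M ≤ Z := by
    have h := Finset.card_filter_add_card_filter_not (s := Finset.univ)
      (fun Y : Fin n → Fin k → Bool => Fmod n k Y = true)
    simp only [Bool.not_eq_true, Finset.card_univ] at h
    rw [hMdef]
    exact_mod_cast (by omega)
  have hZpos : (0 : ℝ) < Z := hM.trans_le hMZ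
  have hsum : ∑ X : Fin n → Fin k → Bool,
      (if Fmod n k X then (-1 : ℝ) else 1) * nuDist n k X * χ X =
      -(2 / Z) * (∑ X, (χ X : ℂ) * ∏ i, gom (par (X i))).re := by
    rw [Complex.re_sum, Finset.mul_sum]
    refine Finset.sum_congr rfl fun X _ => ?_
    rw [prod_gom, Complex.re_ofReal_mul, om_re, nuDist, ← hZ]
    by_cases h : (∑ i, rowXor (X i)) % 3 = 0
    · simp [Fmod, h]
    · simp [Fmod, h]; ring
  rw [hsum, abs_mul, abs_neg, abs_of_pos (by positivity)]
  calc 2 / (Z : ℝ) * |(∑ X, (χ X : ℂ) * ∏ i, gom (par (X i))).re|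
      ≤ 2 / M * ‖∑ X, (χ X : ℂ) * ∏ i, gom (par (X i))‖ := by
        gcongr
        exact Complex.abs_re_le_norm _
    _ = 2 * (‖∑ X, (χ X : ℂ) * ∏ i, gom (par (X i))‖ / M) := by ring
    _ ≤ _ := by gcongr
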